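/- Let G1, G2 be finite groups, let G1 × G2 act on its set of subgroups by conjugation, and let ρ be any function assigning to each conjugacy class of subgroups of G1 × G2 a representative belonging to that class. Then for all subgroups A and D of G1 × G2, the number of subgroups A' in the conjugacy class of A with D ≤ A' equals the sum, over all pairs of conjugacy classes (q1, q2) of subgroups of G1 × G2, of the product: (number of A' in the class of A with ρ(q1) ≤_K A') × (number of B' in the class of ρ(q1) with ρ(q2) ≤_{P/K} B') × (number of C' in the class of ρ(q2) with D ≤_P C'). (This is the decomposition of the class incidence matrix of G1 × G2, from which the table of marks of G1 × G2 is obtained by multiplying by the diagonal matrix of normalizer indices.) -/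

import Mathlib

/-!
If `D ≤ A`, there is exactly one pair `(B, C)` with `D ≤_P C ≤_{P/K} B ≤_K A`, namely
`C = A ⊓ (p₁(D) × p₂(D))` and `B = C ⊔ (k₁(A) × k₂(A))` (`le_iff_exists_chain`,
`eq_inf_of_chain`, `eq_sup_of_chain`). In other words, the incidence matrix of `≤` is the
product of those of `≤_K`, `≤_{P/K}` and `≤_P`.

Such a factorization passes to conjugacy classes (`ncard_comp`): for a conjugation-invariant
relation `R`, the number of conjugates `A'` of `A` with `R B A'` depends only on the class of `B`,
so a sum over all intermediate subgroups `B` can be grouped by classes. Applying this to the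
composite of `≤_K` with the rest and then to the composite of `≤_{P/K}` with `≤_P` gives the
double sum.
-/


/-- The projection `p₁(L)` of a subgroup `L ≤ G₁ × G₂` to `G₁`. -/
def proj1 {G₁ G₂ : Type*} [Group G₁] [Group G₂] (L : Subgroup (G₁ × G₂)) :
    Subgroup G₁ := L.map (MonoidHom.fst G₁ G₂)

/-- The projection `p₂(L)` of a subgroup `L ≤ G₁ × G₂` to `G₂`. -/
def proj2 {G₁ G₂ : Type*} [Group G₁] [Group G₂] (L : Subgroup (G₁ × G₂)) :
    Subgroup G₂ := L.map (MonoidHom.snd G₁ G₂)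

/-- The first Goursat kernel `k₁(L) = {g₁ : (g₁, 1) ∈ L}`. -/
def ker1 {G₁ G₂ : Type*} [Group G₁] [Group G₂] (L : Subgroup (G₁ × G₂)) :
    Subgroup G₁ where
  carrier := {g | (g, 1) ∈ L}
  one_mem' := L.one_mem
  mul_mem' := by intro a b ha hb; simpa using L.mul_mem ha hb
  inv_mem' := by intro a ha; simpa using L.inv_mem ha

/-- The second Goursat kernel `k₂(L) = {g₂ : (1, g₂) ∈ L}`. -/
def ker2 {G₁ G₂ : Type*} [Group G₁] [Group G₂] (L : Subgroup (G₁ × G₂)) :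
    Subgroup G₂ where
  carrier := {g | ((1 : G₁), g) ∈ L}
  one_mem' := L.one_mem
  mul_mem' := by intro a b ha hb; simpa using L.mul_mem ha hb
  inv_mem' := by intro a ha; simpa using L.inv_mem ha

/-- `L' ≤_P L`: containment with equal projections. -/
def subLEP {G₁ G₂ : Type*} [Group G₁] [Group G₂] (L' L : Subgroup (G₁ × G₂)) : Prop :=
  L' ≤ L ∧ proj1 L' = proj1 L ∧ proj2 L' = proj2 L

/-- `L' ≤_K L`: containment with equal Goursat kernels. -/
def subLEK {G₁ G₂ : Type*} [Group G₁] [Group G₂] (L' L : Subgroup (G₁ × G₂)) : Prop :=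
  L' ≤ L ∧ ker1 L' = ker1 L ∧ ker2 L' = ker2 L

/-- `L' ≤_{P/K} L`: containment such that the canonical maps
`p_i(L')/k_i(L') → p_i(L)/k_i(L)` are isomorphisms; equivalently
`p_i(L') ⊔ k_i(L) = p_i(L)` and `p_i(L') ⊓ k_i(L) = k_i(L')` for `i = 1, 2`. -/
def subLEPK {G₁ G₂ : Type*} [Group G₁] [Group G₂] (L' L : Subgroup (G₁ × G₂)) : Prop :=
  L' ≤ L ∧
    proj1 L' ⊔ ker1 L = proj1 L ∧ proj1 L' ⊓ ker1 L = ker1 L' ∧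
    proj2 L' ⊔ ker2 L = proj2 L ∧ proj2 L' ⊓ ker2 L = ker2 L'

/-- Conjugate of a subgroup by a group element. -/
def conjSub {G : Type*} [Group G] (g : G) (H : Subgroup G) : Subgroup G :=
  H.map (MulAut.conj g).toMonoidHom

/-! ### Conjugation and class incidence numbers -/

section Conjugation

variable {G : Type*} [Group G]

lemma mem_conjSub {g x : G} {H : Subgroup G} : x ∈ conjSub g H ↔ g⁻¹ * x * g ∈ H := by
  constructor
  · rintro ⟨y, hy, rfl⟩
    simpa [mul_assoc] using hy
  · intro h
    exact ⟨_, h, by simp [mul_assoc]⟩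

lemma conjSub_conjSub (g h : G) (H : Subgroup G) : conjSub g (conjSub h H) = conjSub (g * h) H := by
  ext x
  simp only [mem_conjSub, mul_inv_rev, mul_assoc]

@[simp] lemma conjSub_one (H : Subgroup G) : conjSub 1 H = H := by
  ext x
  simp [mem_conjSub]

lemma conjSub_injective (g : G) : Function.Injective (conjSub g) := fun H K h => by
  simpa [conjSub_conjSub] using congrArg (conjSub g⁻¹) h

lemma conjSub_mono (g : G) {H K : Subgroup G} (h : H ≤ K) : conjSub g H ≤ conjSub g K :=
  Subgroup.map_mono h

lemma conjSub_sup (g : G) (H K : Subgroup G) : conjSub g (H ⊔ K) = conjSub g H ⊔ conjSub g K :=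
  Subgroup.map_sup _ _ _

lemma conjSub_inf (g : G) (H K : Subgroup G) : conjSub g (H ⊓ K) = conjSub g H ⊓ conjSub g K := by
  ext x
  simp [mem_conjSub]

/-- The number of conjugates of `A` lying above `B` depends only on the conjugacy class of `B`;
the reverse inequality is this one for `g⁻¹`. -/
lemma ncard_le_conj [Finite G] {R : Subgroup G → Subgroup G → Prop}
    (hR : ∀ g B A, R B A → R (conjSub g B) (conjSub g A)) (A B : Subgroup G) (g : G) :
    Set.ncard {A' | (∃ x, conjSub x A = A') ∧ R B A'} ≤
      Set.ncard {A' | (∃ x, conjSub x A = A') ∧ R (conjSub g B) A'} := by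
  refine Set.ncard_le_ncard_of_injOn (conjSub g) ?_ (conjSub_injective g).injOn (Set.toFinite _)
  rintro A' ⟨⟨x, rfl⟩, h⟩
  exact ⟨⟨g * x, (conjSub_conjSub _ _ _).symm⟩, hR _ _ _ h⟩

lemma ncard_conj [Finite G] {R : Subgroup G → Subgroup G → Prop}
    (hR : ∀ g B A, R B A → R (conjSub g B) (conjSub g A)) (A B : Subgroup G) (g : G) :
    Set.ncard {A' | (∃ x, conjSub x A = A') ∧ R (conjSub g B) A'} =
      Set.ncard {A' | (∃ x, conjSub x A = A') ∧ R B A'} := by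
  refine le_antisymm ?_ (ncard_le_conj hR A B g)
  simpa [conjSub_conjSub] using ncard_le_conj hR A (conjSub g B) g⁻¹

lemma ncard_setOf_eq_sum {X : Type*} [Fintype X] (p : X → Prop) [DecidablePred p] :
    Set.ncard {x | p x} = ∑ x, if p x then 1 else 0 := by
  rw [Set.ncard_eq_toFinset_card']
  simp

/-- If the relation `Q` is the composite of `S` and a conjugation-invariant `R` with unique
intermediate subgroup, its class incidence matrix is the product of those of `R` and `S`. -/
lemma ncard_comp [Finite G] (T : Set (Subgroup G))
    (hT : ∀ L : Subgroup G, ∃! t, t ∈ T ∧ ∃ g : G, conjSub g L = t)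
    {Q R S : Subgroup G → Subgroup G → Prop}
    (hR : ∀ g B A, R B A → R (conjSub g B) (conjSub g A))
    (hQ : ∀ D A, Q D A ↔ ∃ B, S D B ∧ R B A)
    (hu : ∀ D A B B', S D B → R B A → S D B' → R B' A → B = B') (A D : Subgroup G) :
    Set.ncard {A' | (∃ g, conjSub g A = A') ∧ Q D A'} =
      ∑ᶠ t ∈ T, Set.ncard {A' | (∃ g, conjSub g A = A') ∧ R t A'} *
        Set.ncard {B | (∃ g, conjSub g t = B) ∧ S D B} := by
  classical
  have := Fintype.ofFinite (Subgroup G)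
  have key : ∀ A' : Subgroup G, (if (∃ g, conjSub g A = A') ∧ Q D A' then 1 else 0) =
      ∑ B, if S D B then (if (∃ g, conjSub g A = A') ∧ R B A' then 1 else 0) else 0 := by
    intro A'
    by_cases h : (∃ g, conjSub g A = A') ∧ Q D A'
    · obtain ⟨B, hS, hB⟩ := (hQ _ _).1 h.2
      rw [if_pos h, Finset.sum_eq_single B]
      · rw [if_pos hS, if_pos ⟨h.1, hB⟩]
      · intro B' _ hne
        split_ifs with h1 h2
        · exact absurd (hu D A' _ _ h1 h2.2 hS hB) hne
        · rfl
        · rfl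
      · simp
    · rw [if_neg h, eq_comm]
      refine Finset.sum_eq_zero fun B _ => ?_
      split_ifs with h1 h2
      · exact absurd ⟨h2.1, (hQ _ _).2 ⟨B, h1, h2.2⟩⟩ h
      · rfl
      · rfl
  -- Each `B` is counted on the right exactly once, at the representative `t` of its class.
  have rep : ∀ B : Subgroup G, Set.ncard {A' | (∃ g, conjSub g A = A') ∧ R B A'} =
      ∑ t ∈ T.toFinset, if (∃ g, conjSub g t = B) then
        Set.ncard {A' | (∃ g, conjSub g A = A') ∧ R t A'} else 0 := by
    intro B
    obtain ⟨t, ⟨ht, g, hg⟩, huniq⟩ := hT B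
    rw [Finset.sum_eq_single t]
    · rw [if_pos ⟨g⁻¹, by simp [← hg, conjSub_conjSub]⟩, ← hg, ncard_conj hR]
    · intro t' ht' hne
      rw [if_neg]
      rintro ⟨x, hx⟩
      exact hne (huniq t' ⟨by simpa using ht', x⁻¹, by simp [← hx, conjSub_conjSub]⟩)
    · intro h
      simp [ht] at h
  have hfin : ∀ f : Subgroup G → ℕ, ∑ᶠ t ∈ T, f t = ∑ t ∈ T.toFinset, f t := fun f => by
    rw [← finsum_mem_coe_finset, Set.coe_toFinset]
  rw [hfin, ncard_setOf_eq_sum, Finset.sum_congr rfl fun A' _ => key A', Finset.sum_comm]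
  trans ∑ B, if S D B then Set.ncard {A' | (∃ g, conjSub g A = A') ∧ R B A'} else 0
  · refine Finset.sum_congr rfl fun B _ => ?_
    split_ifs
    · rw [ncard_setOf_eq_sum]
    · simp
  trans ∑ B, ∑ t ∈ T.toFinset, Set.ncard {A' | (∃ g, conjSub g A = A') ∧ R t A'} *
      if (∃ g, conjSub g t = B) ∧ S D B then 1 else 0
  · refine Finset.sum_congr rfl fun B _ => ?_
    split_ifs with h
    · rw [rep]
      simp [h]
    · simp [h]
  · rw [Finset.sum_comm]
    refine Finset.sum_congr rfl fun t _ => ?_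
    rw [← Finset.mul_sum, ← ncard_setOf_eq_sum]

end Conjugation

/-! ### Factorization of the order relation -/

section Goursat

variable {G₁ G₂ : Type*} [Group G₁] [Group G₂]

lemma mem_proj1 {L : Subgroup (G₁ × G₂)} {a : G₁} : a ∈ proj1 L ↔ ∃ b, (a, b) ∈ L := by
  simp [proj1]

lemma mem_proj2 {L : Subgroup (G₁ × G₂)} {b : G₂} : b ∈ proj2 L ↔ ∃ a, (a, b) ∈ L := by
  simp [proj2]

lemma mem_ker1 {L : Subgroup (G₁ × G₂)} {a : G₁} : a ∈ ker1 L ↔ (a, 1) ∈ L := Iff.rfl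

lemma mem_ker2 {L : Subgroup (G₁ × G₂)} {b : G₂} : b ∈ ker2 L ↔ (1, b) ∈ L := Iff.rfl

lemma proj1_conjSub (g : G₁ × G₂) (L : Subgroup (G₁ × G₂)) :
    proj1 (conjSub g L) = conjSub g.1 (proj1 L) := by
  simp only [proj1, conjSub, Subgroup.map_map]
  rfl

lemma proj2_conjSub (g : G₁ × G₂) (L : Subgroup (G₁ × G₂)) :
    proj2 (conjSub g L) = conjSub g.2 (proj2 L) := by
  simp only [proj2, conjSub, Subgroup.map_map]
  rfl

lemma ker1_conjSub (g : G₁ × G₂) (L : Subgroup (G₁ × G₂)) :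
    ker1 (conjSub g L) = conjSub g.1 (ker1 L) := by
  ext x
  have : g⁻¹ * (x, 1) * g = (g.1⁻¹ * x * g.1, 1) := by ext <;> simp
  rw [mem_ker1, mem_conjSub, mem_conjSub, mem_ker1, this]

lemma ker2_conjSub (g : G₁ × G₂) (L : Subgroup (G₁ × G₂)) :
    ker2 (conjSub g L) = conjSub g.2 (ker2 L) := by
  ext x
  have : g⁻¹ * (1, x) * g = (1, g.2⁻¹ * x * g.2) := by ext <;> simp
  rw [mem_ker2, mem_conjSub, mem_conjSub, mem_ker2, this]

lemma subLEK_conj (g : G₁ × G₂) (B A : Subgroup (G₁ × G₂)) (h : subLEK B A) :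
    subLEK (conjSub g B) (conjSub g A) := by
  obtain ⟨h, h1, h2⟩ := h
  refine ⟨conjSub_mono g h, ?_, ?_⟩
  · rw [ker1_conjSub, ker1_conjSub, h1]
  · rw [ker2_conjSub, ker2_conjSub, h2]

lemma subLEPK_conj (g : G₁ × G₂) (B A : Subgroup (G₁ × G₂)) (h : subLEPK B A) :
    subLEPK (conjSub g B) (conjSub g A) := by
  obtain ⟨h, h1, h2, h3, h4⟩ := h
  refine ⟨conjSub_mono g h, ?_⟩
  simp only [ker1_conjSub, ker2_conjSub, proj1_conjSub, proj2_conjSub, ← conjSub_sup,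
    ← conjSub_inf, h1, h2, h3, h4, and_self]

/-- Elements of `B` are determined by their first coordinate up to `k₂(B)`, so a subgroup of `B`
with the same first projection and second kernel is all of `B`. -/
lemma le_of_proj1_le {B M : Subgroup (G₁ × G₂)} (hM : M ≤ B) (hp : proj1 B ≤ proj1 M)
    (hk : ker2 B ≤ ker2 M) : B ≤ M := by
  rintro ⟨a, b⟩ hx
  obtain ⟨b', hb'⟩ := mem_proj1.1 (hp (mem_proj1.2 ⟨b, hx⟩))
  have h1 : (a, b')⁻¹ * (a, b) = ((1 : G₁), b'⁻¹ * b) := by ext <;> simp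
  have h2 : ((1 : G₁), b'⁻¹ * b) ∈ M :=
    hk (mem_ker2.2 (h1 ▸ B.mul_mem (B.inv_mem (hM hb')) hx))
  have h3 := M.mul_mem hb' h2
  rwa [← h1, mul_inv_cancel_left] at h3

lemma proj1_mono {L M : Subgroup (G₁ × G₂)} (h : L ≤ M) : proj1 L ≤ proj1 M := Subgroup.map_mono h

lemma proj2_mono {L M : Subgroup (G₁ × G₂)} (h : L ≤ M) : proj2 L ≤ proj2 M := Subgroup.map_mono h

lemma proj1_sup_prod (C : Subgroup (G₁ × G₂)) (K₁ : Subgroup G₁) (K₂ : Subgroup G₂) :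
    proj1 (C ⊔ K₁.prod K₂) = proj1 C ⊔ K₁ := by
  have : proj1 (K₁.prod K₂) = K₁ := by
    ext x
    simp only [mem_proj1, Subgroup.mem_prod]
    exact ⟨fun ⟨_, h, _⟩ => h, fun h => ⟨1, h, K₂.one_mem⟩⟩
  exact (Subgroup.map_sup _ _ _).trans (congrArg _ this)

lemma proj2_sup_prod (C : Subgroup (G₁ × G₂)) (K₁ : Subgroup G₁) (K₂ : Subgroup G₂) :
    proj2 (C ⊔ K₁.prod K₂) = proj2 C ⊔ K₂ := by
  have : proj2 (K₁.prod K₂) = K₂ := by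
    ext x
    simp only [mem_proj2, Subgroup.mem_prod]
    exact ⟨fun ⟨_, _, h⟩ => h, fun h => ⟨1, K₁.one_mem, h⟩⟩
  exact (Subgroup.map_sup _ _ _).trans (congrArg _ this)

lemma ker_prod_le (A : Subgroup (G₁ × G₂)) : (ker1 A).prod (ker2 A) ≤ A := by
  rintro ⟨a, b⟩ ⟨ha, hb⟩
  simpa using A.mul_mem (mem_ker1.1 ha) (mem_ker2.1 hb)

/-- The lower intermediate subgroup `C` of a chain is determined by its endpoints. -/
lemma eq_inf_of_chain {D C B A : Subgroup (G₁ × G₂)} (h₁ : subLEP D C) (h₂ : subLEPK C B)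
    (h₃ : subLEK B A) : C = A ⊓ (proj1 D).prod (proj2 D) := by
  obtain ⟨hDC, p1, p2⟩ := h₁
  obtain ⟨hCB, -, -, -, i2⟩ := h₂
  obtain ⟨hBA, -, k2⟩ := h₃
  have hle : C ≤ A ⊓ (proj1 D).prod (proj2 D) := by
    rw [p1, p2]
    exact fun x hx => ⟨hBA (hCB hx), mem_proj1.2 ⟨x.2, hx⟩, mem_proj2.2 ⟨x.1, hx⟩⟩
  refine le_antisymm hle (le_of_proj1_le hle ?_ ?_)
  · intro a ha
    obtain ⟨b, hb⟩ := mem_proj1.1 ha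
    exact p1 ▸ hb.2.1
  · intro b hb
    rw [← i2, k2, ← p2]
    exact ⟨hb.2.2, hb.1⟩

/-- The upper intermediate subgroup `B` of a chain is determined by `C` and `A`. Normality of
`k_i(A)` is not needed, as the projections of the join are computed by `Subgroup.map_sup`. -/
lemma eq_sup_of_chain {C B A : Subgroup (G₁ × G₂)} (h₂ : subLEPK C B)
    (h₃ : subLEK B A) : B = C ⊔ (ker1 A).prod (ker2 A) := by
  obtain ⟨hCB, s1, -, -, -⟩ := h₂
  obtain ⟨hBA, k1, k2⟩ := h₃
  rw [← k1, ← k2]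
  have hle : C ⊔ (ker1 B).prod (ker2 B) ≤ B := sup_le hCB (ker_prod_le B)
  refine le_antisymm (le_of_proj1_le hle ?_ ?_) hle
  · rw [proj1_sup_prod, s1]
  · exact fun b hb => (le_sup_right : _ ≤ C ⊔ _) ⟨(ker1 B).one_mem, hb⟩

lemma le_iff_exists_chain (D A : Subgroup (G₁ × G₂)) :
    D ≤ A ↔ ∃ B, (∃ C, subLEP D C ∧ subLEPK C B) ∧ subLEK B A := by
  refine ⟨fun h => ?_, fun ⟨B, ⟨C, h1, h2⟩, h3⟩ => h1.1.trans (h2.1.trans h3.1)⟩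
  obtain ⟨C, hC⟩ : ∃ C, C = A ⊓ (proj1 D).prod (proj2 D) := ⟨_, rfl⟩
  obtain ⟨B, hB⟩ : ∃ B, B = C ⊔ (ker1 A).prod (ker2 A) := ⟨_, rfl⟩
  have hDC : D ≤ C := hC ▸ le_inf h fun x hx => ⟨mem_proj1.2 ⟨x.2, hx⟩, mem_proj2.2 ⟨x.1, hx⟩⟩
  have hCA : C ≤ A := hC ▸ inf_le_left
  have p1 : proj1 D = proj1 C := by
    refine le_antisymm (proj1_mono hDC) fun a ha => ?_
    obtain ⟨b, hb⟩ := mem_proj1.1 ha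
    rw [hC] at hb
    exact hb.2.1
  have p2 : proj2 D = proj2 C := by
    refine le_antisymm (proj2_mono hDC) fun b hb => ?_
    obtain ⟨a, ha⟩ := mem_proj2.1 hb
    rw [hC] at ha
    exact ha.2.2
  have hBA : B ≤ A := hB ▸ sup_le hCA (ker_prod_le A)
  have hKB : (ker1 A).prod (ker2 A) ≤ B := hB ▸ le_sup_right
  have k1 : ker1 B = ker1 A :=
    le_antisymm (fun a ha => hBA ha) fun a ha => hKB ⟨ha, (ker2 A).one_mem⟩
  have k2 : ker2 B = ker2 A :=
    le_antisymm (fun a ha => hBA ha) fun a ha => hKB ⟨(ker1 A).one_mem, ha⟩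
  refine ⟨B, ⟨C, ⟨hDC, p1, p2⟩, hB ▸ le_sup_left, ?_, ?_, ?_, ?_⟩, hBA, k1, k2⟩
  · rw [k1, hB, proj1_sup_prod]
  · rw [k1, ← p1, hC]
    ext a
    exact ⟨fun h => ⟨h.2, h.1, (proj2 D).one_mem⟩, fun h => ⟨h.2.1, h.1⟩⟩
  · rw [k2, hB, proj2_sup_prod]
  · rw [k2, ← p2, hC]
    ext b
    exact ⟨fun h => ⟨h.2, (proj1 D).one_mem, h.1⟩, fun h => ⟨h.2.2, h.1⟩⟩

end Goursat

/-- Decomposition of the class incidence matrix of `G₁ × G₂` as a product of the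
class incidence matrices of `≤_K`, `≤_{P/K}` and `≤_P`: if `T` is a transversal of
the conjugacy classes of subgroups of `G₁ × G₂` (a choice of one representative in
each class), then for all subgroups `A, D ≤ G₁ × G₂`, the number of subgroups in the
class of `A` containing `D` equals the sum over pairs of classes of the products of
the corresponding class incidence numbers.  (From this matrix decomposition the
table of marks of `G₁ × G₂` is obtained by multiplying by the diagonal matrix of
normalizer indices.) -/
theorem tom_decomposition {G₁ G₂ : Type*} [Group G₁] [Group G₂]
    [Fintype G₁] [Fintype G₂]
    (T : Set (Subgroup (G₁ × G₂)))
    (hT : ∀ L : Subgroup (G₁ × G₂), ∃! t, t ∈ T ∧ ∃ g : G₁ × G₂, conjSub g L = t)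
    (A D : Subgroup (G₁ × G₂)) :
    Set.ncard {A' : Subgroup (G₁ × G₂) | (∃ g : G₁ × G₂, conjSub g A = A') ∧ D ≤ A'} =
    ∑ᶠ t₁ ∈ T, ∑ᶠ t₂ ∈ T,
      Set.ncard {A' : Subgroup (G₁ × G₂) |
          (∃ g : G₁ × G₂, conjSub g A = A') ∧ subLEK t₁ A'} *
      (Set.ncard {B' : Subgroup (G₁ × G₂) |
          (∃ g : G₁ × G₂, conjSub g t₁ = B') ∧ subLEPK t₂ B'} *
       Set.ncard {C' : Subgroup (G₁ × G₂) |
          (∃ g : G₁ × G₂, conjSub g t₂ = C') ∧ subLEP D C'}) := by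
  rw [ncard_comp T hT (Q := fun D A => D ≤ A) (R := subLEK)
    (S := fun D B => ∃ C, subLEP D C ∧ subLEPK C B) subLEK_conj le_iff_exists_chain ?_ A D]
  · refine finsum_mem_congr rfl fun t₁ _ => ?_
    rw [ncard_comp T hT (Q := fun D B => ∃ C, subLEP D C ∧ subLEPK C B) (R := subLEPK)
      (S := subLEP) subLEPK_conj (fun _ _ => Iff.rfl) ?_ t₁ D]
    · exact mul_finsum_mem _ _
    · intro D B C C' h1 h2 h1' h2'
      have hB : subLEK B B := ⟨le_rfl, rfl, rfl⟩
      rw [eq_inf_of_chain h1 h2 hB, eq_inf_of_chain h1' h2' hB]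
  · rintro D A B B' ⟨C, h1, h2⟩ h3 ⟨C', h1', h2'⟩ h3'
    rw [eq_sup_of_chain h2 h3, eq_sup_of_chain h2' h3', eq_inf_of_chain h1 h2 h3,
      eq_inf_of_chain h1' h2' h3']
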